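/- Let μ, ν be Borel probability measures on ℝ with finite first moments and μ ≤_cd ν, define c(u) = sup_{k∈ℝ} (C_{μ_u}(k) − C_ν(k)) for u ∈ (0,1) with c(0) = 0, and set u* = sup{u ∈ (0,1) : c(u) = 0} (with sup ∅ = 0). Suppose u* < 1. Let S* be a shadow of μ_{u*} in ν, let μ' ∈ 𝓜 satisfy μ_{u*} + μ' = μ, and let ν' ∈ 𝓜 satisfy S* + ν' = ν. Then ℓ := inf(supp μ') is finite, ν'((ℓ,∞)) = 0, and μ'({ℓ}) = 0 or ν'({ℓ}) = 0; that is, the support of μ' lies strictly to the right of the support of ν'. -/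

import Mathlib

open MeasureTheory Set Filter

noncomputable section

/-- `η ∈ 𝓜`: a finite Borel measure on ℝ with finite first moment. -/
def MemM (η : MeasureTheory.Measure ℝ) : Prop :=
  MeasureTheory.IsFiniteMeasure η ∧ MeasureTheory.Integrable (fun x : ℝ => x) η

/-- Convex-decreasing order `≤_cd`. -/
def LeCD (η χ : MeasureTheory.Measure ℝ) : Prop :=
  ∀ f : ℝ → ℝ, ConvexOn ℝ Set.univ f → Antitone f →
    MeasureTheory.Integrable f η → MeasureTheory.Integrable f χ →
    ∫ x, f x ∂η ≤ ∫ x, f x ∂χ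

/-- Positive convex-decreasing order `≤_pcd`. -/
def LePCD (η χ : MeasureTheory.Measure ℝ) : Prop :=
  ∀ f : ℝ → ℝ, (∀ x, 0 ≤ f x) → ConvexOn ℝ Set.univ f → Antitone f →
    MeasureTheory.Integrable f η → MeasureTheory.Integrable f χ →
    ∫ x, f x ∂η ≤ ∫ x, f x ∂χ

/-- Positive convex order `≤_pc`. -/
def LePC (η χ : MeasureTheory.Measure ℝ) : Prop :=
  ∀ f : ℝ → ℝ, (∀ x, 0 ≤ f x) → ConvexOn ℝ Set.univ f →
    MeasureTheory.Integrable f η → MeasureTheory.Integrable f χ →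
    ∫ x, f x ∂η ≤ ∫ x, f x ∂χ

/-- A supermartingale coupling of `η` and `χ`. -/
def IsSupermartingaleCoupling (η χ : MeasureTheory.Measure ℝ)
    (π : MeasureTheory.Measure (ℝ × ℝ)) : Prop :=
  MeasureTheory.IsProbabilityMeasure π ∧
  π.map Prod.fst = η ∧ π.map Prod.snd = χ ∧
  MeasureTheory.Integrable (fun p : ℝ × ℝ => p.2) π ∧
  ∀ B : Set ℝ, MeasurableSet B →
    ∫ p in B ×ˢ (Set.univ : Set ℝ), (p : ℝ × ℝ).2 ∂π ≤ ∫ x in B, x ∂η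

/-- The potential function `P_η(k) = ∫ (k-x)⁺ η(dx)`. -/
def Ppot (η : MeasureTheory.Measure ℝ) (k : ℝ) : ℝ := ∫ x, max (k - x) 0 ∂η

/-- The potential function `C_η(k) = ∫ (x-k)⁺ η(dx)`. -/
def Cpot (η : MeasureTheory.Measure ℝ) (k : ℝ) : ℝ := ∫ x, max (x - k) 0 ∂η

/-- The left-continuous quantile function `G_η(u) = sup {k | η((-∞,k]) < u}`. -/
def quantile (η : MeasureTheory.Measure ℝ) (u : ℝ) : ℝ :=
  sSup {k : ℝ | (η (Set.Iic k)).toReal < u}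

/-- The lift `μ_u = μ|_{(-∞,G(u))} + (u - μ((-∞,G(u)))) δ_{G(u)}`, with `μ_0 = 0`, `μ_1 = μ`. -/
def muU (μ : MeasureTheory.Measure ℝ) (u : ℝ) : MeasureTheory.Measure ℝ :=
  if u ≤ 0 then 0
  else if 1 ≤ u then μ
  else μ.restrict (Set.Iio (quantile μ u)) +
    (ENNReal.ofReal (u - (μ (Set.Iio (quantile μ u))).toReal)) •
      MeasureTheory.Measure.dirac (quantile μ u)

/-- `S` is a shadow of `μ` in `ν`. -/
def IsShadow (μ ν S : MeasureTheory.Measure ℝ) : Prop :=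
  MemM S ∧ LeCD μ S ∧ (∀ A : Set ℝ, MeasurableSet A → S A ≤ ν A) ∧
  ∀ η : MeasureTheory.Measure ℝ, MemM η → LeCD μ η →
    (∀ A : Set ℝ, MeasurableSet A → η A ≤ ν A) → LeCD S η

/-- `h` is the convex hull of `f`. -/
def IsConvexHullFn (f h : ℝ → ℝ) : Prop :=
  ConvexOn ℝ Set.univ h ∧ (∀ x, h x ≤ f x) ∧
  ∀ g : ℝ → ℝ, ConvexOn ℝ Set.univ g → (∀ x, g x ≤ f x) → ∀ x, g x ≤ h x

/-- The class `𝒟(a,b)`. -/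
def MemD (a b : ℝ) (f : ℝ → ℝ) : Prop :=
  (∀ x, 0 ≤ f x) ∧ Monotone f ∧ ConvexOn ℝ Set.univ f ∧
  Filter.Tendsto f Filter.atBot (nhds 0) ∧
  Filter.Tendsto (fun z => f z - (a * z - b)) Filter.atTop (nhds 0)

/-- The topological support of a measure. -/
def msupport (η : MeasureTheory.Measure ℝ) : Set ℝ :=
  {x : ℝ | ∀ U ∈ nhds x, η U ≠ 0}

open ProbabilityTheory in
theorem quantile_le_iff (μ : Measure ℝ) [IsProbabilityMeasure μ] {t : ℝ} (ht : t ∈ Ioo (0 : ℝ) 1)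
    (x : ℝ) : quantile μ t ≤ x ↔ t ≤ (μ (Iic x)).toReal := by
  have hF : ∀ k, (μ (Iic k)).toReal = cdf μ k := fun k => (cdf_eq_real μ k).symm
  have hmono := monotone_cdf μ
  have hne : {k : ℝ | (μ (Iic k)).toReal < t}.Nonempty := by
    obtain ⟨k, hk⟩ := ((tendsto_cdf_atBot μ).eventually (gt_mem_nhds ht.1)).exists
    exact ⟨k, by simpa [hF] using hk⟩
  have hbound : ∀ y, t ≤ (μ (Iic y)).toReal → y ∈ upperBounds {k : ℝ | (μ (Iic k)).toReal < t} := by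
    intro y hy k hk
    simp only [hF, mem_ofPred_eq] at hy hk
    by_contra! h
    linarith [hmono h.le]
  constructor
  · intro h
    by_contra! hx
    obtain ⟨y, hy⟩ := ((tendsto_cdf_atTop μ).eventually (lt_mem_nhds ht.2)).exists
    have hbdd : BddAbove {k : ℝ | (μ (Iic k)).toReal < t} := ⟨y, hbound y (by rw [hF]; exact hy.le)⟩
    have hrc : Tendsto (cdf μ) (nhdsWithin x (Ioi x)) (nhds (cdf μ x)) :=
      ((cdf μ).right_continuous x).tendsto.mono_left (nhdsWithin_mono _ Ioi_subset_Ici_self)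
    rw [hF] at hx
    obtain ⟨z, hz, hzx⟩ := ((hrc.eventually (gt_mem_nhds hx)).and self_mem_nhdsWithin).exists
    have : z ≤ quantile μ t := le_csSup hbdd (by simpa [hF] using hz)
    exact absurd (hzx.trans_le this) (not_lt.2 h)
  · intro h
    exact csSup_le hne (hbound x h)

theorem monotoneOn_quantile (μ : Measure ℝ) [IsProbabilityMeasure μ] :
    MonotoneOn (quantile μ) (Ioo 0 1) := by
  intro s hs t ht hst
  rw [quantile_le_iff μ hs]
  exact hst.trans ((quantile_le_iff μ ht _).1 le_rfl)

theorem aemeasurable_quantile (μ : Measure ℝ) [IsProbabilityMeasure μ] {A : Set ℝ}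
    (hA : A ⊆ Ioo 0 1) : AEMeasurable (quantile μ) (volume.restrict A) :=
  (aemeasurable_restrict_of_monotoneOn measurableSet_Ioo (monotoneOn_quantile μ)).mono_measure
    (Measure.restrict_mono hA le_rfl)

theorem map_quantile_Iic (μ : Measure ℝ) [IsProbabilityMeasure μ] {u : ℝ} (hu1 : u ≤ 1) (x : ℝ) :
    ((volume.restrict (Ioo 0 u)).map (quantile μ)) (Iic x)
      = ENNReal.ofReal (min u (μ (Iic x)).toReal) := by
  rw [Measure.map_apply_of_aemeasurable (aemeasurable_quantile μ (Ioo_subset_Ioo_right hu1))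
    measurableSet_Iic, Measure.restrict_apply' measurableSet_Ioo]
  have hpre : quantile μ ⁻¹' Iic x ∩ Ioo 0 u = Iic (μ (Iic x)).toReal ∩ Ioo 0 u := by
    ext t
    simp only [mem_inter_iff, mem_preimage, mem_Iic]
    refine and_congr_left fun ht => quantile_le_iff μ ⟨ht.1, ht.2.trans_le hu1⟩ x
  rw [hpre]
  apply le_antisymm
  · refine (measure_mono (t := Ioc 0 (min u (μ (Iic x)).toReal)) ?_).trans ?_
    · rintro t ⟨h1, h2, h3⟩
      exact ⟨h2, le_min h3.le h1⟩
    · simp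
  · refine le_trans ?_ (measure_mono (s := Ioo 0 (min u (μ (Iic x)).toReal)) ?_)
    · simp
    · rintro t ⟨h1, h2⟩
      exact ⟨(h2.trans_le (min_le_right _ _)).le, h1, h2.trans_le (min_le_left _ _)⟩

theorem map_quantile_Ioo_zero_one (μ : Measure ℝ) [IsProbabilityMeasure μ] :
    (volume.restrict (Ioo 0 1)).map (quantile μ) = μ := by
  refine Measure.ext_of_Iic _ _ fun x => ?_
  rw [map_quantile_Iic μ le_rfl, min_eq_right, ENNReal.ofReal_toReal (measure_ne_top _ _)]
  exact measureReal_le_one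

theorem muU_eq_map_quantile (μ : Measure ℝ) [IsProbabilityMeasure μ] {u : ℝ} (hu0 : 0 ≤ u)
    (hu1 : u < 1) : muU μ u = (volume.restrict (Ioo 0 u)).map (quantile μ) := by
  rcases hu0.eq_or_lt with rfl | hu0
  · simp [muU]
  simp only [muU, not_le.2 hu0, not_le.2 hu1, if_false]
  set G := quantile μ u with hG
  have hlt : ∀ x, x < G → (μ (Iic x)).toReal < u := fun x hx => by
    by_contra! h
    exact absurd ((quantile_le_iff μ ⟨hu0, hu1⟩ x).2 h) (not_le.2 hx)
  have hIio : (μ (Iio G)).toReal ≤ u := by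
    refine ENNReal.toReal_le_of_le_ofReal hu0.le ?_
    obtain ⟨s, hs, hslt, hst⟩ := exists_seq_strictMono_tendsto G
    have hU : Iio G = ⋃ n, Iic (s n) := by
      ext x
      simp only [mem_Iio, mem_iUnion, mem_Iic]
      exact ⟨fun h => ((hst.eventually (lt_mem_nhds h)).exists).imp fun _ h => h.le,
        fun ⟨n, hn⟩ => hn.trans_lt (hslt n)⟩
    rw [hU, (monotone_nat_of_le_succ fun n => Iic_subset_Iic.2 (hs.monotone n.le_succ)
      ).measure_iUnion]
    refine iSup_le fun n => ?_
    rw [← ENNReal.ofReal_toReal (measure_ne_top μ (Iic (s n)))]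
    exact ENNReal.ofReal_le_ofReal (hlt _ (hslt n)).le
  symm
  refine Measure.ext_of_Iic _ _ fun x => ?_
  rw [map_quantile_Iic μ hu1.le, Measure.add_apply, Measure.smul_apply,
    Measure.restrict_apply measurableSet_Iic, Measure.dirac_apply' _ measurableSet_Iic]
  rcases lt_or_ge x G with hx | hx
  · rw [min_eq_right (hlt x hx).le, ENNReal.ofReal_toReal (measure_ne_top _ _),
      inter_eq_left.2 (Iic_subset_Iio.2 hx)]
    simp [hx]
  · rw [min_eq_left ((quantile_le_iff μ ⟨hu0, hu1⟩ x).1 hx),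
      inter_eq_right.2 (Iio_subset_Iic_self.trans (Iic_subset_Iic.2 hx))]
    simp only [mem_Iic, hx, indicator_of_mem, Pi.one_apply, smul_eq_mul, mul_one]
    rw [ENNReal.ofReal_sub _ ENNReal.toReal_nonneg, ENNReal.ofReal_toReal (measure_ne_top _ _)]
    refine (add_tsub_cancel_of_le ?_).symm
    rw [← ENNReal.ofReal_toReal (measure_ne_top μ (Iio G))]
    exact ENNReal.ofReal_le_ofReal hIio
theorem volume_inter_Ioi_of_isLowerSet {L : Set ℝ} (hL : IsLowerSet L) (hne : L.Nonempty)
    (hb : BddAbove L) (x : ℝ) : volume (L ∩ Ioi x) = ENNReal.ofReal (sSup L - x) := by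
  apply le_antisymm
  · refine (measure_mono (t := Ioc x (sSup L)) fun t ht => ⟨ht.2, le_csSup hb ht.1⟩).trans ?_
    simp
  · refine le_trans ?_ (measure_mono (s := Ioo x (sSup L)) ?_)
    · simp
    · rintro t ⟨h1, h2⟩
      obtain ⟨y, hy, hty⟩ := exists_lt_of_lt_csSup hne h2
      exact ⟨hL hty.le hy, h1⟩

theorem lintegral_lintegral_Ioc_le {μ₁ μ₂ : Measure ℝ} [SFinite μ₁] [SFinite μ₂]
    (hP : ∀ k : ℝ, ∫⁻ x, ENNReal.ofReal (k - x) ∂μ₁ ≤ ∫⁻ x, ENNReal.ofReal (k - x) ∂μ₂)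
    {g : ℝ → ℝ} (hg : Antitone g) {K : ℝ} (hg0 : ∀ t ≤ K, 0 ≤ g t) :
    ∫⁻ x, (∫⁻ t in Ioc x K, ENNReal.ofReal (g t)) ∂μ₁
      ≤ ∫⁻ x, (∫⁻ t in Ioc x K, ENNReal.ofReal (g t)) ∂μ₂ := by
  have hgm : Measurable g := hg.measurable
  set L : ℝ → Set ℝ := fun s => {t | s < g t} ∩ Iic K with hLdef
  have hcake : ∀ x, ∫⁻ t in Ioc x K, ENNReal.ofReal (g t)
      = ∫⁻ s in Ioi (0 : ℝ), volume (L s ∩ Ioi x) := by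
    intro x
    rw [lintegral_eq_lintegral_meas_lt _ _ hgm.aemeasurable]
    · refine lintegral_congr fun s => ?_
      rw [Measure.restrict_apply' measurableSet_Ioc]
      congr 1
      ext t
      simp only [hLdef, mem_inter_iff, mem_ofPred_eq, mem_Ioc, mem_Iic, mem_Ioi]
      tauto
    · filter_upwards [ae_restrict_mem measurableSet_Ioc] with t ht using hg0 t ht.2
  have hmeas : Measurable (Function.uncurry fun x s => volume (L s ∩ Ioi x)) := by
    have hS : MeasurableSet {p : (ℝ × ℝ) × ℝ | p.1.2 < g p.2 ∧ p.2 ≤ K ∧ p.1.1 < p.2} := by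
      have h1 : Measurable fun p : (ℝ × ℝ) × ℝ => g p.2 := hgm.comp measurable_snd
      measurability
    convert measurable_measure_prodMk_left (ν := (volume : Measure ℝ)) hS using 2 with p
    obtain ⟨x, s⟩ := p
    change volume (L s ∩ Ioi x) = _
    congr 1
    ext t
    simp only [hLdef, mem_inter_iff, mem_ofPred_eq, mem_Iic, mem_Ioi, mem_preimage]
    tauto
  simp_rw [hcake]
  rw [lintegral_lintegral_swap hmeas.aemeasurable, lintegral_lintegral_swap hmeas.aemeasurable]
  refine lintegral_mono fun s => ?_
  rcases (L s).eq_empty_or_nonempty with he | hne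
  · simp [he]
  · have hlow : IsLowerSet (L s) := fun a b hba ha => ⟨ha.1.trans_le (hg hba), hba.trans ha.2⟩
    simp_rw [volume_inter_Ioi_of_isLowerSet hlow hne ⟨K, fun _ h => h.2⟩]
    exact hP _

theorem ConvexOn.ofReal_sub_tangent_eq_lintegral {f : ℝ → ℝ} (hf : ConvexOn ℝ univ f) {x K : ℝ}
    (hx : x ≤ K) :
    ENNReal.ofReal (f x - (f K + derivWithin f (Ioi K) K * (x - K)))
      = ∫⁻ t in Ioc x K,
          ENNReal.ofReal (derivWithin f (Ioi K) K - derivWithin f (Ioi t) t) := by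
  set r : ℝ → ℝ := fun t => derivWithin f (Ioi t) t with hr
  have hmono : Monotone r := by
    have := hf.monotoneOn_rightDeriv
    rw [interior_univ, monotoneOn_univ] at this
    exact this
  have hint : ∫ t in x..K, r t = f K - f x := by
    refine intervalIntegral.integral_eq_sub_of_hasDeriv_right_of_le hx ?_ ?_
      hmono.intervalIntegrable
    · exact (hf.continuousOn isOpen_univ).mono (subset_univ _)
    · intro t _
      exact hf.hasDerivWithinAt_rightDeriv_of_mem_interior (by simp)
  have hint' : ∫ t in x..K, (r K - r t) = f x - (f K + r K * (x - K)) := by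
    rw [intervalIntegral.integral_sub (by simp) hmono.intervalIntegrable, hint]
    simp only [intervalIntegral.integral_const, smul_eq_mul]
    ring
  change ENNReal.ofReal (f x - (f K + r K * (x - K))) = ∫⁻ t in Ioc x K, ENNReal.ofReal (r K - r t)
  rw [← hint', intervalIntegral.integral_of_le hx, ofReal_integral_eq_lintegral_ofReal]
  · exact ((intervalIntegrable_const (c := r K)).sub hmono.intervalIntegrable).1
  · filter_upwards [ae_restrict_mem measurableSet_Ioc] with t ht using sub_nonneg.2 (hmono ht.2)

theorem ConvexOn.tangent_le {f : ℝ → ℝ} (hf : ConvexOn ℝ univ f) (x K : ℝ) :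
    f K + derivWithin f (Ioi K) K * (x - K) ≤ f x := by
  rcases lt_trichotomy x K with h | rfl | h
  · have h1 := hf.slope_le_leftDeriv_of_mem_interior (x := x) (y := K) (mem_univ _) (by simp) h
    have h2 := hf.leftDeriv_le_rightDeriv_of_mem_interior (x := K) (by simp)
    have h3 := h1.trans h2
    rw [slope_def_field, div_le_iff₀ (by linarith)] at h3
    linarith
  · simp
  · have h1 := hf.rightDeriv_le_slope_of_mem_interior (x := K) (y := x) (by simp) (mem_univ _) h
    rw [slope_def_field, le_div_iff₀ (by linarith)] at h1
    linarith

theorem integrable_pos_part_sub {η : Measure ℝ} [IsFiniteMeasure η]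
    (hη : Integrable (fun x : ℝ => x) η) (k : ℝ) : Integrable (fun x => max (k - x) 0) η :=
  ((integrable_const k).sub hη).pos_part

theorem integrable_sub_pos_part {η : Measure ℝ} [IsFiniteMeasure η]
    (hη : Integrable (fun x : ℝ => x) η) (k : ℝ) : Integrable (fun x => max (x - k) 0) η :=
  (hη.sub (integrable_const k)).pos_part

theorem lintegral_ofReal_sub_eq {η : Measure ℝ} [IsFiniteMeasure η]
    (hη : Integrable (fun x : ℝ => x) η) (k : ℝ) :
    ∫⁻ x, ENNReal.ofReal (k - x) ∂η = ENNReal.ofReal (Ppot η k) := by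
  rw [Ppot, ofReal_integral_eq_lintegral_ofReal (integrable_pos_part_sub hη k)
    (Eventually.of_forall fun x => le_max_right _ _)]
  simp

theorem Ppot_nonneg (η : Measure ℝ) (k : ℝ) : 0 ≤ Ppot η k :=
  integral_nonneg fun _ => le_max_right _ _

theorem Cpot_nonneg (η : Measure ℝ) (k : ℝ) : 0 ≤ Cpot η k :=
  integral_nonneg fun _ => le_max_right _ _

theorem Cpot_eq_Ppot_add {η : Measure ℝ} [IsFiniteMeasure η]
    (hη : Integrable (fun x : ℝ => x) η) (k : ℝ) :
    Cpot η k = Ppot η k + ∫ x, x ∂η - k * η.real univ := by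
  have h : ∀ x : ℝ, max (x - k) 0 = max (k - x) 0 + x - k := fun x => by
    rcases le_total x k with h | h
    · rw [max_eq_right (by linarith), max_eq_left (by linarith)]; ring
    · rw [max_eq_left (by linarith), max_eq_right (by linarith)]; ring
  unfold Cpot Ppot
  simp_rw [h]
  have h1 : Integrable (fun x => max (k - x) 0 + x) η := (integrable_pos_part_sub hη k).add hη
  rw [integral_sub h1 (integrable_const k), integral_add (integrable_pos_part_sub hη k) hη]
  simp [mul_comm]

/-- Potential-function criterion for the convex-decreasing order. -/
theorem LeCD.of_Ppot_le {η χ : Measure ℝ} [IsFiniteMeasure η] [IsFiniteMeasure χ]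
    (hη : Integrable (fun x : ℝ => x) η) (hχ : Integrable (fun x : ℝ => x) χ)
    (hmass : η.real univ = χ.real univ) (hmean : ∫ x, x ∂η = ∫ x, x ∂χ)
    {K : ℝ} (hK : η (Ioi K) = 0) (hP : ∀ k, Ppot η k ≤ Ppot χ k) : LeCD η χ := by
  intro f hf _ hfη hfχ
  set r := derivWithin f (Ioi K) K with hr
  have hmono : Monotone fun t => derivWithin f (Ioi t) t := by
    have := hf.monotoneOn_rightDeriv
    rwa [interior_univ, monotoneOn_univ] at this
  have hT : ∀ {ζ : Measure ℝ} [IsFiniteMeasure ζ], Integrable (fun x : ℝ => x) ζ →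
      Integrable (fun x => f K + r * (x - K)) ζ := fun hζ =>
    (integrable_const _).add ((hζ.sub (integrable_const K)).const_mul r)
  have hTint : ∀ {ζ : Measure ℝ} [IsFiniteMeasure ζ], Integrable (fun x : ℝ => x) ζ →
      ∫ x, (f K + r * (x - K)) ∂ζ = (f K - r * K) * ζ.real univ + r * ∫ x, x ∂ζ := fun {ζ} _ hζ => by
    have h1 : Integrable (fun x => r * (x - K)) ζ := (hζ.sub (integrable_const K)).const_mul r
    rw [integral_add (integrable_const _) h1, integral_const_mul, integral_sub hζ (integrable_const K)]
    simp only [integral_const, smul_eq_mul]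
    ring
  have hlin : ∀ {ζ : Measure ℝ}, ∫⁻ x, (∫⁻ t in Ioc x K,
      ENNReal.ofReal (r - derivWithin f (Ioi t) t)) ∂ζ
      = ∫⁻ x in Iic K, ENNReal.ofReal (f x - (f K + r * (x - K))) ∂ζ := fun {ζ} => by
    rw [← lintegral_indicator measurableSet_Iic]
    apply lintegral_congr
    intro x
    by_cases hx : x ≤ K
    · rw [indicator_of_mem (by exact hx), hf.ofReal_sub_tangent_eq_lintegral hx]
    · rw [indicator_of_notMem (by exact hx), Ioc_eq_empty (fun h => hx h.le)]
      simp
  have hcore := lintegral_lintegral_Ioc_le (μ₁ := η) (μ₂ := χ) (K := K)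
    (g := fun t => r - derivWithin f (Ioi t) t)
    (fun k => by
      rw [lintegral_ofReal_sub_eq hη, lintegral_ofReal_sub_eq hχ]
      exact ENNReal.ofReal_le_ofReal (hP k))
    (fun a b hab => sub_le_sub_left (hmono hab) _) (fun t ht => sub_nonneg.2 (hmono ht))
  rw [hlin, hlin] at hcore
  have hηK : η.restrict (Iic K) = η :=
    Measure.restrict_eq_self_of_ae_mem (by
      rw [ae_iff]
      convert hK using 2
      ext x
      simp)
  have hcore' : ∫⁻ x, ENNReal.ofReal (f x - (f K + r * (x - K))) ∂η
      ≤ ∫⁻ x, ENNReal.ofReal (f x - (f K + r * (x - K))) ∂χ := by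
    rw [hηK] at hcore
    exact hcore.trans (setLIntegral_le_lintegral _ _)
  have hnn : ∀ x, 0 ≤ f x - (f K + r * (x - K)) := fun x => sub_nonneg.2 (hf.tangent_le x K)
  have h1 : Integrable (fun x => f x - (f K + r * (x - K))) η := hfη.sub (hT hη)
  have h2 : Integrable (fun x => f x - (f K + r * (x - K))) χ := hfχ.sub (hT hχ)
  rw [← ofReal_integral_eq_lintegral_ofReal h1 (Eventually.of_forall hnn),
    ← ofReal_integral_eq_lintegral_ofReal h2 (Eventually.of_forall hnn),
    ENNReal.ofReal_le_ofReal_iff (integral_nonneg hnn), integral_sub hfη (hT hη),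
    integral_sub hfχ (hT hχ), hTint hη, hTint hχ, hmass, hmean] at hcore'
  linarith
theorem map_quantile_restrict_le (μ : Measure ℝ) [IsProbabilityMeasure μ] {A : Set ℝ}
    (hA : A ⊆ Ioo 0 1) : (volume.restrict A).map (quantile μ) ≤ μ := by
  conv_rhs => rw [← map_quantile_Ioo_zero_one μ]
  refine Measure.le_iff.2 fun B hB => ?_
  rw [Measure.map_apply_of_aemeasurable (aemeasurable_quantile μ hA) hB,
    Measure.map_apply_of_aemeasurable (aemeasurable_quantile μ subset_rfl) hB]
  exact Measure.restrict_mono hA le_rfl _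

theorem integral_map_quantile_restrict (μ : Measure ℝ) [IsProbabilityMeasure μ] {A : Set ℝ}
    (hA : A ⊆ Ioo 0 1) {h : ℝ → ℝ} (hh : Integrable h μ) :
    ∫ x, h x ∂((volume.restrict A).map (quantile μ)) = ∫ t in A, h (quantile μ t) :=
  integral_map (aemeasurable_quantile μ hA)
    (hh.mono_measure (map_quantile_restrict_le μ hA)).aestronglyMeasurable

theorem intervalIntegrable_comp_quantile (μ : Measure ℝ) [IsProbabilityMeasure μ] {h : ℝ → ℝ}
    (hh : Integrable h μ) {a b : ℝ} (ha : a ∈ Icc (0 : ℝ) 1) (hb : b ∈ Icc (0 : ℝ) 1) :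
    IntervalIntegrable (fun t => h (quantile μ t)) volume a b := by
  have h1 : IntegrableOn (fun t => h (quantile μ t)) (Ioo 0 1) := by
    rw [← map_quantile_Ioo_zero_one μ] at hh
    exact (integrable_map_measure hh.aestronglyMeasurable
      (aemeasurable_quantile μ subset_rfl)).1 hh
  have h2 : IntervalIntegrable (fun t => h (quantile μ t)) volume 0 1 :=
    (intervalIntegrable_iff_integrableOn_Ioo_of_le zero_le_one).2 h1
  refine h2.mono_set ?_
  rw [uIcc_of_le (zero_le_one' ℝ)]
  exact uIcc_subset_Icc ha hb

theorem integral_eq_intervalIntegral_quantile (μ : Measure ℝ) [IsProbabilityMeasure μ] {h : ℝ → ℝ}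
    (hh : Integrable h μ) : ∫ x, h x ∂μ = ∫ t in (0 : ℝ)..1, h (quantile μ t) := by
  conv_lhs => rw [← map_quantile_Ioo_zero_one μ]
  rw [integral_map_quantile_restrict μ subset_rfl hh, intervalIntegral.integral_of_le zero_le_one,
    integral_Ioc_eq_integral_Ioo]

theorem muU_le (μ : Measure ℝ) [IsProbabilityMeasure μ] {u : ℝ} (hu0 : 0 ≤ u) (hu1 : u < 1) :
    muU μ u ≤ μ := by
  rw [muU_eq_map_quantile μ hu0 hu1]
  exact map_quantile_restrict_le μ (Ioo_subset_Ioo_right hu1.le)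

theorem integral_muU (μ : Measure ℝ) [IsProbabilityMeasure μ] {u : ℝ} (hu0 : 0 ≤ u) (hu1 : u < 1)
    {h : ℝ → ℝ} (hh : Integrable h μ) :
    ∫ x, h x ∂(muU μ u) = ∫ t in (0 : ℝ)..u, h (quantile μ t) := by
  rw [muU_eq_map_quantile μ hu0 hu1, integral_map_quantile_restrict μ (Ioo_subset_Ioo_right hu1.le)
    hh, intervalIntegral.integral_of_le hu0, integral_Ioc_eq_integral_Ioo]

theorem muU_real_univ (μ : Measure ℝ) [IsProbabilityMeasure μ] {u : ℝ} (hu0 : 0 ≤ u)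
    (hu1 : u < 1) : (muU μ u).real univ = u := by
  have := integral_muU μ hu0 hu1 (h := fun _ => 1) (integrable_const 1)
  simpa using this

/-- The part of `ν` carried by the quantile levels in `(0, s]` and `(r, 1)`. -/
def quantileGap (ν : Measure ℝ) (s r : ℝ) : Measure ℝ :=
  (volume.restrict (Ioc 0 s ∪ Ioo r 1)).map (quantile ν)

section QuantileGap

variable (ν : Measure ℝ) [IsProbabilityMeasure ν] {s r : ℝ}

theorem quantileGap_le (hs : 0 ≤ s) (hsr : s < r) (hr : r ≤ 1) : quantileGap ν s r ≤ ν :=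
  map_quantile_restrict_le ν (union_subset (fun _ h => ⟨h.1, h.2.trans_lt (hsr.trans_le hr)⟩)
    (Ioo_subset_Ioo_left (hs.trans hsr.le)))

theorem integral_quantileGap (hs : 0 ≤ s) (hsr : s < r) (hr : r ≤ 1) {h : ℝ → ℝ}
    (hh : Integrable h ν) :
    ∫ x, h x ∂(quantileGap ν s r)
      = (∫ t in (0 : ℝ)..s, h (quantile ν t)) + ∫ t in r..1, h (quantile ν t) := by
  have i1 := intervalIntegrable_comp_quantile ν hh (a := 0) (b := s) (by simp)
    ⟨hs, hsr.le.trans hr⟩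
  have i2 := intervalIntegrable_comp_quantile ν hh (a := r) (b := 1) ⟨hs.trans hsr.le, hr⟩
    (by simp)
  rw [quantileGap, integral_map_quantile_restrict ν _ hh, setIntegral_union _ measurableSet_Ioo,
    intervalIntegral.integral_of_le hs, intervalIntegral.integral_of_le hr,
    integral_Ioc_eq_integral_Ioo (x := r)]
  · exact (intervalIntegrable_iff_integrableOn_Ioc_of_le hs).1 i1
  · exact (intervalIntegrable_iff_integrableOn_Ioo_of_le hr).1 i2
  · exact Set.disjoint_left.2 fun x hx hx' => absurd (hx.2.trans_lt hsr) (not_lt.2 hx'.1.le)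
  · exact union_subset (fun _ h => ⟨h.1, h.2.trans_lt (hsr.trans_le hr)⟩)
      (Ioo_subset_Ioo_left (hs.trans hsr.le))

theorem quantileGap_real_univ (hs : 0 ≤ s) (hsr : s < r) (hr : r ≤ 1) :
    (quantileGap ν s r).real univ = s + (1 - r) := by
  have := integral_quantileGap ν hs hsr hr (h := fun _ => 1) (integrable_const 1)
  simpa using this

theorem integral_quantileGap_of_eq_zero (hs : 0 ≤ s) (hsr : s < r) (hr : r ≤ 1) {h : ℝ → ℝ}
    (hh : Integrable h ν) (h0 : ∀ t ∈ Ioo s r, h (quantile ν t) = 0) :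
    ∫ x, h x ∂(quantileGap ν s r) = ∫ x, h x ∂ν := by
  have m0 : (0 : ℝ) ∈ Icc (0 : ℝ) 1 := by simp
  have ms : s ∈ Icc (0 : ℝ) 1 := ⟨hs, hsr.le.trans hr⟩
  have mr : r ∈ Icc (0 : ℝ) 1 := ⟨hs.trans hsr.le, hr⟩
  have m1 : (1 : ℝ) ∈ Icc (0 : ℝ) 1 := by simp
  have hz : ∫ t in s..r, h (quantile ν t) = 0 := by
    rw [intervalIntegral.integral_of_le hsr.le, integral_Ioc_eq_integral_Ioo,
      setIntegral_congr_fun measurableSet_Ioo h0]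
    simp
  rw [integral_quantileGap ν hs hsr hr hh, integral_eq_intervalIntegral_quantile ν hh,
    ← intervalIntegral.integral_add_adjacent_intervals
      (intervalIntegrable_comp_quantile ν hh m0 ms) (intervalIntegrable_comp_quantile ν hh ms m1),
    ← intervalIntegral.integral_add_adjacent_intervals
      (intervalIntegrable_comp_quantile ν hh ms mr) (intervalIntegrable_comp_quantile ν hh mr m1),
    hz, zero_add]

variable (hν : Integrable (fun x : ℝ => x) ν)
include hν

theorem Ppot_quantileGap_of_le (hs : 0 ≤ s) (hsr : s < r) (hr : r ≤ 1) {k : ℝ}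
    (hk : ∀ t ∈ Ioo s r, k ≤ quantile ν t) : Ppot (quantileGap ν s r) k = Ppot ν k :=
  integral_quantileGap_of_eq_zero ν hs hsr hr (integrable_pos_part_sub hν k)
    fun t ht => max_eq_right (sub_nonpos.2 (hk t ht))

theorem Cpot_quantileGap_of_ge (hs : 0 ≤ s) (hsr : s < r) (hr : r ≤ 1) {k : ℝ}
    (hk : ∀ t ∈ Ioo s r, quantile ν t ≤ k) : Cpot (quantileGap ν s r) k = Cpot ν k :=
  integral_quantileGap_of_eq_zero ν hs hsr hr (integrable_sub_pos_part hν k)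
    fun t ht => max_eq_right (sub_nonpos.2 (hk t ht))

theorem Ppot_quantileGap_zero_left (hr0 : 0 < r) (hr : r < 1) :
    Ppot (quantileGap ν 0 r) (quantile ν r) = 0 := by
  rw [Ppot, integral_quantileGap ν le_rfl hr0 hr.le (integrable_pos_part_sub hν _),
    intervalIntegral.integral_same, zero_add, intervalIntegral.integral_of_le hr.le,
    integral_Ioc_eq_integral_Ioo, setIntegral_congr_fun (g := fun _ => (0 : ℝ)) measurableSet_Ioo]
  · simp
  · intro t ht
    exact max_eq_right (sub_nonpos.2
      (monotoneOn_quantile ν ⟨hr0, hr⟩ ⟨hr0.trans ht.1, ht.2⟩ ht.1.le))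

theorem Cpot_quantileGap_one_right (hs0 : 0 < s) (hs : s < 1) :
    Cpot (quantileGap ν s 1) (quantile ν s) = 0 := by
  rw [Cpot, integral_quantileGap ν hs0.le hs le_rfl (integrable_sub_pos_part hν _),
    intervalIntegral.integral_same, add_zero, intervalIntegral.integral_of_le hs0.le,
    setIntegral_congr_fun (g := fun _ => (0 : ℝ)) measurableSet_Ioc]
  · simp
  · intro t ht
    exact max_eq_right (sub_nonpos.2
      (monotoneOn_quantile ν ⟨ht.1, ht.2.trans_lt hs⟩ ⟨hs0, hs⟩ ht.2))

theorem Ppot_quantileGap_of_mem_Icc (hs0 : 0 < s) (hsr : s < r) (hr : r < 1) {k : ℝ}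
    (hk : k ∈ Icc (quantile ν s) (quantile ν r)) :
    Ppot (quantileGap ν s r) k = s * k - ∫ t in (0 : ℝ)..s, quantile ν t := by
  have hs1 := hsr.trans hr
  have hr0 := hs0.trans hsr
  rw [Ppot, integral_quantileGap ν hs0.le hsr hr.le (integrable_pos_part_sub hν _),
    intervalIntegral.integral_of_le hr.le, integral_Ioc_eq_integral_Ioo,
    setIntegral_congr_fun (s := Ioo r 1) (g := fun _ => (0 : ℝ)) measurableSet_Ioo,
    intervalIntegral.integral_congr_ae (g := fun t => k - quantile ν t),
    intervalIntegral.integral_sub (by simp)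
      (intervalIntegrable_comp_quantile ν hν (by simp) ⟨hs0.le, hs1.le⟩)]
  · simp
  · refine Eventually.of_forall fun t ht => ?_
    rw [uIoc_of_le hs0.le] at ht
    exact max_eq_left (sub_nonneg.2 ((monotoneOn_quantile ν ⟨ht.1, ht.2.trans_lt hs1⟩
      ⟨hs0, hs1⟩ ht.2).trans hk.1))
  · intro t ht
    exact max_eq_right (sub_nonpos.2 (hk.2.trans
      (monotoneOn_quantile ν ⟨hr0, hr⟩ ⟨hr0.trans ht.1, ht.2⟩ ht.1.le)))

end QuantileGap

theorem Ppot_convex {η : Measure ℝ} [IsFiniteMeasure η] (hη : Integrable (fun x : ℝ => x) η)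
    {a k b : ℝ} (hak : a ≤ k) (hkb : k ≤ b) :
    (b - a) * Ppot η k ≤ (b - k) * Ppot η a + (k - a) * Ppot η b := by
  have ia := (integrable_pos_part_sub hη a).const_mul (b - k)
  have ib := (integrable_pos_part_sub hη b).const_mul (k - a)
  unfold Ppot
  rw [← integral_const_mul, ← integral_const_mul, ← integral_const_mul, ← integral_add ia ib]
  refine integral_mono ((integrable_pos_part_sub hη k).const_mul _) (ia.add ib) fun x => ?_
  have h1 := le_max_left (a - x) 0
  have h2 := le_max_right (a - x) 0
  have h3 := le_max_left (b - x) 0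
  have h4 := le_max_right (b - x) 0
  simp only
  rcases le_total k x with h | h
  · rw [max_eq_right (sub_nonpos.2 h)]
    nlinarith [mul_nonneg (sub_nonneg.2 hkb) h2, mul_nonneg (sub_nonneg.2 hak) h4]
  · rw [max_eq_left (sub_nonneg.2 h)]
    nlinarith [mul_le_mul_of_nonneg_left h1 (sub_nonneg.2 hkb),
      mul_le_mul_of_nonneg_left h3 (sub_nonneg.2 hak)]

theorem Ppot_mono {η : Measure ℝ} [IsFiniteMeasure η] (hη : Integrable (fun x : ℝ => x) η) :
    Monotone (Ppot η) := fun a b hab =>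
  integral_mono (integrable_pos_part_sub hη a) (integrable_pos_part_sub hη b) fun _ =>
    max_le_max_right _ (sub_le_sub_right hab _)

theorem Cpot_anti {η : Measure ℝ} [IsFiniteMeasure η] (hη : Integrable (fun x : ℝ => x) η) :
    Antitone (Cpot η) := fun a b hab =>
  integral_mono (integrable_sub_pos_part hη b) (integrable_sub_pos_part hη a) fun _ =>
    max_le_max_right _ (sub_le_sub_left hab _)

theorem exists_quantileGap_integral_eq {η ν : Measure ℝ} [IsFiniteMeasure η]
    [IsProbabilityMeasure ν] (hη : Integrable (fun x : ℝ => x) η)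
    (hν : Integrable (fun x : ℝ => x) ν) {u : ℝ} (hu0 : 0 < u) (hu1 : u < 1)
    (hmass : η.real univ = u) (hP : ∀ k, Ppot η k ≤ Ppot ν k) (hC : ∀ k, Cpot η k ≤ Cpot ν k) :
    ∃ s ∈ Icc 0 u, ∫ x, x ∂(quantileGap ν s (s + (1 - u))) = ∫ x, x ∂η := by
  have hfin : ∀ {s r : ℝ}, 0 ≤ s → s < r → r ≤ 1 → IsFiniteMeasure (quantileGap ν s r) :=
    fun h1 h2 h3 => isFiniteMeasure_of_le ν (quantileGap_le ν h1 h2 h3)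
  have hcont : ContinuousOn (fun s => ∫ x, x ∂(quantileGap ν s (s + (1 - u)))) (Icc 0 u) := by
    have hii : IntegrableOn (quantile ν) (uIcc 0 1) := by
      have := intervalIntegrable_comp_quantile ν hν (a := 0) (b := 1) (by simp) (by simp)
      rw [uIcc_of_le zero_le_one, integrableOn_Icc_iff_integrableOn_Ioc]
      exact (intervalIntegrable_iff_integrableOn_Ioc_of_le zero_le_one).1 this
    have h1 := intervalIntegral.continuousOn_primitive_interval hii
    have h2 := intervalIntegral.continuousOn_primitive_interval_left hii
    rw [uIcc_of_le zero_le_one] at h1 h2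
    refine ((h1.mono (Icc_subset_Icc_right hu1.le)).add
      (h2.comp (f := fun s => s + (1 - u)) (by fun_prop) (fun s hs => ?_))).congr fun s hs => ?_
    · exact ⟨by linarith [hs.1], by linarith [hs.2]⟩
    · exact integral_quantileGap ν hs.1 (by linarith) (by linarith [hs.2]) hν
  have hmem : ∫ x, x ∂η ∈ Icc (∫ x, x ∂(quantileGap ν u (u + (1 - u))))
      (∫ x, x ∂(quantileGap ν 0 (0 + (1 - u)))) := by
    have e1 : u + (1 - u) = 1 := by ring
    rw [e1, zero_add]
    constructor
    · have := hfin hu0.le hu1 le_rfl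
      have hi := hν.mono_measure (quantileGap_le ν hu0.le hu1 le_rfl)
      have c1 := Cpot_eq_Ppot_add hi (quantile ν u)
      have c2 := Cpot_eq_Ppot_add hη (quantile ν u)
      rw [quantileGap_real_univ ν hu0.le hu1 le_rfl, Cpot_quantileGap_one_right ν hν hu0 hu1,
        Ppot_quantileGap_of_le ν hν hu0.le hu1 le_rfl (fun t ht =>
          monotoneOn_quantile ν ⟨hu0, hu1⟩ ⟨hu0.trans ht.1, ht.2⟩ ht.1.le)] at c1
      rw [hmass] at c2
      linarith [hP (quantile ν u), Cpot_nonneg η (quantile ν u)]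
    · have hb0 : 0 < 1 - u := by linarith
      have hb1 : 1 - u < 1 := by linarith
      have := hfin le_rfl hb0 hb1.le
      have hi := hν.mono_measure (quantileGap_le ν le_rfl hb0 hb1.le)
      have c1 := Cpot_eq_Ppot_add hi (quantile ν (1 - u))
      have c2 := Cpot_eq_Ppot_add hη (quantile ν (1 - u))
      rw [quantileGap_real_univ ν le_rfl hb0 hb1.le, Ppot_quantileGap_zero_left ν hν hb0 hb1,
        Cpot_quantileGap_of_ge ν hν le_rfl hb0 hb1.le (fun t ht =>
          monotoneOn_quantile ν ⟨ht.1, ht.2.trans hb1⟩ ⟨hb0, hb1⟩ ht.2.le)] at c1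
      rw [hmass] at c2
      linarith [hC (quantile ν (1 - u)), Ppot_nonneg η (quantile ν (1 - u))]
  exact intermediate_value_Icc' hu0.le hcont hmem

theorem exists_leCD_le {η ν : Measure ℝ} [IsFiniteMeasure η]
    [IsProbabilityMeasure ν] (hη : Integrable (fun x : ℝ => x) η)
    (hν : Integrable (fun x : ℝ => x) ν) {u : ℝ} (hu0 : 0 < u) (hu1 : u < 1)
    (hmass : η.real univ = u) {K : ℝ} (hK : η (Ioi K) = 0)
    (hP : ∀ k, Ppot η k ≤ Ppot ν k) (hC : ∀ k, Cpot η k ≤ Cpot ν k) :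
    ∃ χ : Measure ℝ, MemM χ ∧ LeCD η χ ∧ χ ≤ ν ∧ ∫ x, x ∂χ = ∫ x, x ∂η := by
  obtain ⟨s, ⟨hs0, hsu⟩, hmean⟩ := exists_quantileGap_integral_eq hη hν hu0 hu1 hmass hP hC
  set r := s + (1 - u) with hr
  have hsr : s < r := by linarith
  have hr1 : r ≤ 1 := by linarith
  have hle := quantileGap_le ν hs0 hsr hr1
  have : IsFiniteMeasure (quantileGap ν s r) := isFiniteMeasure_of_le ν hle
  have hi := hν.mono_measure hle
  have hmass' : (quantileGap ν s r).real univ = u := by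
    rw [quantileGap_real_univ ν hs0 hsr hr1]; linarith
  have hCP : ∀ k, Cpot η k - Ppot η k = Cpot (quantileGap ν s r) k - Ppot (quantileGap ν s r) k := by
    intro k
    have c1 := Cpot_eq_Ppot_add hi k
    have c2 := Cpot_eq_Ppot_add hη k
    rw [hmass', hmean] at c1
    rw [hmass] at c2
    linarith
  have hL : 0 < s → ∀ k ≤ quantile ν s, Ppot η k ≤ Ppot (quantileGap ν s r) k := by
    intro hs k hk
    rw [Ppot_quantileGap_of_le ν hν hs0 hsr hr1 fun t ht => hk.trans (monotoneOn_quantile ν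
      ⟨hs, hsr.trans_le hr1⟩ ⟨hs.trans ht.1, ht.2.trans_le hr1⟩ ht.1.le)]
    exact hP k
  have hR : r < 1 → ∀ k, quantile ν r ≤ k → Ppot η k ≤ Ppot (quantileGap ν s r) k := by
    intro hr k hk
    have h1 := Cpot_quantileGap_of_ge ν hν hs0 hsr hr1 fun t ht => (monotoneOn_quantile ν
      ⟨hs0.trans_lt ht.1, ht.2.trans hr⟩ ⟨hs0.trans_lt hsr, hr⟩ ht.2.le).trans hk
    linarith [hCP k, hC k]
  have hPgap : ∀ k, Ppot η k ≤ Ppot (quantileGap ν s r) k := by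
    intro k
    rcases hs0.eq_or_lt with hs | hs
    · have hr' : r < 1 := by linarith
      rcases le_total (quantile ν r) k with hk | hk
      · exact hR hr' k hk
      · have h1 := hR hr' _ le_rfl
        have h2 : Ppot (quantileGap ν s r) (quantile ν r) = 0 := by
          rw [← hs]; exact Ppot_quantileGap_zero_left ν hν (by linarith) hr'
        linarith [Ppot_mono hη hk, Ppot_nonneg (quantileGap ν s r) k]
    rcases hr1.eq_or_lt with hr' | hr'
    · rcases le_total k (quantile ν s) with hk | hk
      · exact hL hs k hk
      · have h1 := hL hs _ le_rfl
        have h2 : Cpot (quantileGap ν s r) (quantile ν s) = 0 := by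
          rw [hr']; exact Cpot_quantileGap_one_right ν hν hs (by linarith)
        linarith [Cpot_anti hη hk, Cpot_nonneg (quantileGap ν s r) k, hCP k, hCP (quantile ν s)]
    rcases le_or_gt k (quantile ν s) with hk | hk
    · exact hL hs k hk
    rcases le_or_gt (quantile ν r) k with hk' | hk'
    · exact hR hr' k hk'
    have h1 := hL hs _ le_rfl
    have h2 := hR hr' _ le_rfl
    have hc := Ppot_convex hη hk.le hk'.le
    have hab := hk.trans hk'
    rw [Ppot_quantileGap_of_mem_Icc ν hν hs hsr hr' ⟨le_rfl, hab.le⟩] at h1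
    rw [Ppot_quantileGap_of_mem_Icc ν hν hs hsr hr' ⟨hab.le, le_rfl⟩] at h2
    rw [Ppot_quantileGap_of_mem_Icc ν hν hs hsr hr' ⟨hk.le, hk'.le⟩]
    have h3 := mul_le_mul_of_nonneg_left h1 (sub_nonneg.2 hk'.le)
    have h4 := mul_le_mul_of_nonneg_left h2 (sub_nonneg.2 hk.le)
    refine le_of_mul_le_mul_left ?_ (sub_pos.2 hab)
    linarith
  exact ⟨quantileGap ν s r, ⟨this, hi⟩,
    LeCD.of_Ppot_le hη hi (hmass.trans hmass'.symm) hmean.symm hK hPgap, hle, hmean⟩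
theorem Cpot_muU_le_add (μ : Measure ℝ) [IsProbabilityMeasure μ]
    (hμ : Integrable (fun x : ℝ => x) μ) {u v y : ℝ} (hu : 0 ≤ u) (huv : u < v) (hv : v < 1)
    (hy : quantile μ v ≤ y) (k : ℝ) :
    Cpot (muU μ v) k ≤ Cpot (muU μ u) k + (v - u) * max (y - k) 0 := by
  have hh := integrable_sub_pos_part hμ k
  have hv0 := hu.trans_lt huv
  have m0 : (0 : ℝ) ∈ Icc (0 : ℝ) 1 := by simp
  have mu : u ∈ Icc (0 : ℝ) 1 := ⟨hu, (huv.trans hv).le⟩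
  have mv : v ∈ Icc (0 : ℝ) 1 := ⟨hv0.le, hv.le⟩
  rw [Cpot, Cpot, integral_muU μ hv0.le hv hh, integral_muU μ hu (huv.trans hv) hh,
    ← intervalIntegral.integral_add_adjacent_intervals
      (intervalIntegrable_comp_quantile μ hh m0 mu) (intervalIntegrable_comp_quantile μ hh mu mv)]
  gcongr
  calc ∫ t in u..v, max (quantile μ t - k) 0 ≤ ∫ _ in u..v, max (y - k) 0 := by
        refine intervalIntegral.integral_mono_on_of_le_Ioo huv.le
          (intervalIntegrable_comp_quantile μ hh mu mv) (by simp) fun t ht => ?_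
        exact max_le_max_right _ (sub_le_sub_right ((monotoneOn_quantile μ
          ⟨hu.trans_lt ht.1, ht.2.trans hv⟩ ⟨hv0, hv⟩ ht.2.le).trans hy) _)
    _ = (v - u) * max (y - k) 0 := by simp

theorem tendsto_Cpot_atTop {η : Measure ℝ} [IsFiniteMeasure η]
    (hη : Integrable (fun x : ℝ => x) η) : Tendsto (Cpot η) atTop (nhds 0) := by
  have h : Tendsto (fun k => ∫ x, max (x - k) 0 ∂η) atTop (nhds (∫ _, (0 : ℝ) ∂η)) := by
    refine tendsto_integral_filter_of_dominated_convergence (fun x => |x|)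
      (Eventually.of_forall fun k => (integrable_sub_pos_part hη k).aestronglyMeasurable) ?_
      hη.abs (Eventually.of_forall fun x => ?_)
    · filter_upwards [eventually_ge_atTop 0] with k hk
      refine Eventually.of_forall fun x => ?_
      rw [Real.norm_of_nonneg (le_max_right _ _)]
      exact max_le (by linarith [le_abs_self x]) (abs_nonneg x)
    · refine tendsto_const_nhds.congr' ?_
      filter_upwards [eventually_ge_atTop x] with k hk
      exact (max_eq_right (sub_nonpos.2 hk)).symm
  rw [integral_zero] at h
  exact h

theorem bddAbove_range_Cpot_sub {η ν : Measure ℝ} [IsProbabilityMeasure ν]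
    [IsFiniteMeasure η] (hη : Integrable (fun x : ℝ => x) η)
    (hν : Integrable (fun x : ℝ => x) ν) (hmass : η.real univ ≤ 1) :
    BddAbove (range fun k => Cpot η k - Cpot ν k) := by
  refine ⟨(∫ x, |x| ∂η) + ∫ x, |x| ∂ν, ?_⟩
  rintro _ ⟨k, rfl⟩
  have h1 : Cpot η k ≤ (∫ x, |x| ∂η) + max (-k) 0 * η.real univ := by
    calc Cpot η k ≤ ∫ x, (|x| + max (-k) 0) ∂η := by
          refine integral_mono (integrable_sub_pos_part hη k)
            (hη.abs.add (integrable_const _)) fun x => ?_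
          exact max_le (by linarith [le_abs_self x, le_max_left (-k) 0])
            (add_nonneg (abs_nonneg x) (le_max_right _ _))
      _ = _ := by
          rw [integral_add hη.abs (integrable_const _)]
          simp [mul_comm]
  have h2 : max (-k) 0 - ∫ x, |x| ∂ν ≤ Cpot ν k := by
    calc max (-k) 0 - ∫ x, |x| ∂ν = ∫ x, (max (-k) 0 - |x|) ∂ν := by
          rw [integral_sub (integrable_const _) hν.abs]
          simp
      _ ≤ Cpot ν k := by
          refine integral_mono ((integrable_const _).sub hν.abs)
            (integrable_sub_pos_part hν k) fun x => ?_
          simp only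
          rcases le_total (-k) 0 with h | h
          · rw [max_eq_right h]
            exact le_max_of_le_right (by linarith [abs_nonneg x])
          · rw [max_eq_left h]
            exact le_max_of_le_left (by linarith [neg_abs_le x])
  have h3 := mul_le_mul_of_nonneg_left hmass (le_max_right (-k) 0)
  simp only
  linarith

theorem iSup_Cpot_sub_eq_zero_iff {η ν : Measure ℝ} [IsProbabilityMeasure ν]
    [IsFiniteMeasure η] (hη : Integrable (fun x : ℝ => x) η)
    (hν : Integrable (fun x : ℝ => x) ν) (hmass : η.real univ ≤ 1) :
    (⨆ k, (Cpot η k - Cpot ν k)) = 0 ↔ ∀ k, Cpot η k ≤ Cpot ν k := by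
  have hb := bddAbove_range_Cpot_sub hη hν hmass
  constructor
  · intro h k
    have : Cpot η k - Cpot ν k ≤ _ := le_ciSup hb k
    linarith
  · intro h
    refine le_antisymm (ciSup_le fun k => sub_nonpos.2 (h k)) ?_
    have ht : Tendsto (fun k => -Cpot ν k) atTop (nhds 0) := by
      simpa using (tendsto_Cpot_atTop hν).neg
    refine le_of_tendsto ht (Eventually.of_forall fun k => ?_)
    refine le_trans (b := Cpot η k - Cpot ν k) ?_ (le_ciSup hb k)
    linarith [Cpot_nonneg η k]

theorem Ppot_mono_measure {η χ : Measure ℝ} [IsFiniteMeasure χ]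
    (hχ : Integrable (fun x : ℝ => x) χ) (h : η ≤ χ) (k : ℝ) : Ppot η k ≤ Ppot χ k :=
  integral_mono_measure h (Eventually.of_forall fun _ => le_max_right _ _)
    (integrable_pos_part_sub hχ k)

theorem LeCD.Ppot_le {η χ : Measure ℝ} [IsFiniteMeasure η] [IsFiniteMeasure χ] (h : LeCD η χ)
    (hη : Integrable (fun x : ℝ => x) η) (hχ : Integrable (fun x : ℝ => x) χ) (k : ℝ) :
    Ppot η k ≤ Ppot χ k := by
  refine h _ ?_ (fun a b hab => max_le_max_right _ (sub_le_sub_left hab _))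
    (integrable_pos_part_sub hη k) (integrable_pos_part_sub hχ k)
  exact ((convexOn_const k convex_univ).sub (concaveOn_id convex_univ)).sup
    (convexOn_const 0 convex_univ)

theorem LeCD.integral_ge {η χ : Measure ℝ} (h : LeCD η χ)
    (hη : Integrable (fun x : ℝ => x) η) (hχ : Integrable (fun x : ℝ => x) χ) :
    ∫ x, x ∂χ ≤ ∫ x, x ∂η := by
  have := h (fun x => -x) (concaveOn_id convex_univ).neg (fun a b hab => neg_le_neg hab)
    hη.neg hχ.neg
  rw [integral_neg, integral_neg] at this
  linarith

theorem LeCD.real_univ_eq {η χ : Measure ℝ} [IsFiniteMeasure η] [IsFiniteMeasure χ]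
    (h : LeCD η χ) : η.real univ = χ.real univ := by
  have h1 := h (fun _ => 1) (convexOn_const _ convex_univ) antitone_const
    (integrable_const _) (integrable_const _)
  have h2 := h (fun _ => -1) (convexOn_const _ convex_univ) antitone_const
    (integrable_const _) (integrable_const _)
  simp only [integral_const, smul_eq_mul] at h1 h2
  linarith

/-- If `C_η ≤ C_ν` and `P_η ≤ P_ν`, the shadow of `η` in `ν` preserves the mean, and hence
dominates `η` in call potentials. -/
theorem IsShadow.Cpot_le {η ν S : Measure ℝ} [IsFiniteMeasure η] [IsProbabilityMeasure ν]
    (hS : IsShadow η ν S) (hη : Integrable (fun x : ℝ => x) η)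
    (hν : Integrable (fun x : ℝ => x) ν) (hmass : η.real univ < 1) {K : ℝ} (hK : η (Ioi K) = 0)
    (hP : ∀ k, Ppot η k ≤ Ppot ν k) (hC : ∀ k, Cpot η k ≤ Cpot ν k) (k : ℝ) :
    Cpot η k ≤ Cpot S k := by
  obtain ⟨⟨hSf, hSi⟩, hηS, _, hmin⟩ := hS
  rcases (measureReal_nonneg (μ := η) (s := univ)).eq_or_lt with h0 | h0
  · have : η = 0 := by
      rw [← Measure.measure_univ_eq_zero]
      exact (measureReal_eq_zero_iff).1 h0.symm
    rw [this]
    simpa [Cpot] using Cpot_nonneg S k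
  obtain ⟨χ, hχM, hχcd, hχle, hmean⟩ := exists_leCD_le hη hν h0 hmass rfl hK hP hC
  have h1 := (hmin χ hχM hχcd fun A _ => hχle A).integral_ge hSi hχM.2
  have h2 := hηS.Ppot_le hη hSi k
  have h3 := hηS.real_univ_eq
  rw [Cpot_eq_Ppot_add hη, Cpot_eq_Ppot_add hSi, h3]
  linarith

theorem measure_Ici_mul_le_Cpot {η : Measure ℝ} [IsFiniteMeasure η]
    (hη : Integrable (fun x : ℝ => x) η) (y k : ℝ) :
    η.real (Ici y) * (y - k) ≤ Cpot η k := by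
  calc η.real (Ici y) * (y - k) = ∫ _ in Ici y, (y - k) ∂η := by simp
    _ ≤ ∫ x in Ici y, max (x - k) 0 ∂η := by
        refine setIntegral_mono_on (integrable_const _).integrableOn
          (integrable_sub_pos_part hη k).integrableOn measurableSet_Ici fun x hx => ?_
        exact le_max_of_le_left (sub_le_sub_right hx _)
    _ ≤ Cpot η k := setIntegral_le_integral (integrable_sub_pos_part hη k)
        (Eventually.of_forall fun _ => le_max_right _ _)

theorem isLeast_msupport_sInf {η : Measure ℝ} (hne : {y | η (Iic y) ≠ 0}.Nonempty)
    (hbdd : BddBelow {y | η (Iic y) ≠ 0}) :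
    IsLeast (msupport η) (sInf {y | η (Iic y) ≠ 0}) := by
  set l := sInf {y | η (Iic y) ≠ 0} with hl
  have hlt : ∀ x < l, η (Iic x) = 0 := fun x hx => by
    by_contra h
    exact absurd (csInf_le hbdd h) (not_le.2 hx)
  constructor
  · intro U hU hU0
    obtain ⟨a, b, hab, hsub⟩ := mem_nhds_iff_exists_Ioo_subset.1 hU
    obtain ⟨y, hy, hyb⟩ := exists_lt_of_csInf_lt hne hab.2
    obtain ⟨a', ha, hal⟩ := exists_between hab.1
    refine hy (measure_mono_null (t := Iic a' ∪ U) (fun x hx => ?_)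
      (measure_union_null (hlt a' hal) hU0))
    rcases le_or_gt x a' with h | h
    · exact Or.inl h
    · exact Or.inr (hsub ⟨ha.trans h, lt_of_le_of_lt hx hyb⟩)
  · intro x hx
    by_contra! h
    obtain ⟨z, hxz, hz⟩ := exists_between h
    exact hx (Iic z) (Iic_mem_nhds hxz) (hlt z hz)

theorem exists_measure_Iic_ne_zero {η : Measure ℝ} (h : η ≠ 0) : ∃ y, η (Iic y) ≠ 0 := by
  by_contra! h0
  refine h (Measure.measure_univ_eq_zero.1 ?_)
  rw [← iUnion_Iic_of_not_bddAbove_range (f := fun n : ℕ => (n : ℝ))]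
  · exact measure_iUnion_null fun n => h0 n
  · exact not_bddAbove_of_tendsto_atTop tendsto_natCast_atTop_atTop

theorem exists_measure_Ici_ne_zero {η : Measure ℝ} (h : η ≠ 0) : ∃ y, η (Ici y) ≠ 0 := by
  by_contra! h0
  refine h (Measure.measure_univ_eq_zero.1 ?_)
  refine measure_mono_null (fun x _ => ?_) (measure_iUnion_null fun n : ℕ => h0 (-(n : ℝ)))
  obtain ⟨n, hn⟩ := exists_nat_ge (-x)
  exact mem_iUnion.2 ⟨n, neg_le.1 hn⟩

/-- Proposition 4.4: if `u* < 1`, the support of `μ - μ_{u*}` lies strictly to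
the right of the support of `ν - S^ν(μ_{u*})`. -/
theorem support_separation_at_uStar
    (μ ν : MeasureTheory.Measure ℝ)
    [MeasureTheory.IsProbabilityMeasure μ] [MeasureTheory.IsProbabilityMeasure ν]
    (hμ : MeasureTheory.Integrable (fun x : ℝ => x) μ)
    (hν : MeasureTheory.Integrable (fun x : ℝ => x) ν)
    (hcd : LeCD μ ν)
    (c : ℝ → ℝ)
    (hc0 : c 0 = 0)
    (hcu : ∀ u ∈ Set.Ioo (0:ℝ) 1, c u = ⨆ k : ℝ, (Cpot (muU μ u) k - Cpot ν k))
    (uStar : ℝ) (huStar : uStar = sSup {u : ℝ | u ∈ Set.Ioo (0:ℝ) 1 ∧ c u = 0})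
    (hlt : uStar < 1)
    (SStar : MeasureTheory.Measure ℝ) (hSStar : IsShadow (muU μ uStar) ν SStar)
    (μ' : MeasureTheory.Measure ℝ) (hμ' : MemM μ') (hμsum : muU μ uStar + μ' = μ)
    (ν' : MeasureTheory.Measure ℝ) (hν' : MemM ν') (hνsum : SStar + ν' = ν) :
    (msupport μ').Nonempty ∧ BddBelow (msupport μ') ∧
    ν' (Set.Ioi (sInf (msupport μ'))) = 0 ∧
    (μ' {sInf (msupport μ')} = 0 ∨ ν' {sInf (msupport μ')} = 0) := by
  set A : Set ℝ := {u : ℝ | u ∈ Ioo (0 : ℝ) 1 ∧ c u = 0} with hA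
  have hAb : BddAbove A := ⟨1, fun u hu => hu.1.2.le⟩
  have hu0 : 0 ≤ uStar := huStar ▸ Real.sSup_nonneg fun u hu => hu.1.1.le
  have hfin : ∀ {u}, 0 ≤ u → u < 1 → IsFiniteMeasure (muU μ u) := fun h0 h1 =>
    isFiniteMeasure_of_le μ (muU_le μ h0 h1)
  have hc : ∀ u ∈ Ioo (0 : ℝ) 1, c u = 0 ↔ ∀ k, Cpot (muU μ u) k ≤ Cpot ν k := by
    intro u hu
    have := hfin hu.1.le hu.2
    rw [hcu u hu]
    exact iSup_Cpot_sub_eq_zero_iff (hμ.mono_measure (muU_le μ hu.1.le hu.2)) hν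
      (by rw [muU_real_univ μ hu.1.le hu.2]; exact hu.2.le)
  have := hfin hu0 hlt
  have hle := muU_le μ hu0 hlt
  have hi := hμ.mono_measure hle
  have hmass := muU_real_univ μ hu0 hlt
  have hC : ∀ k, Cpot (muU μ uStar) k ≤ Cpot ν k := by
    intro k
    rcases hu0.eq_or_lt with h | h
    · rw [← h]
      simpa [muU, Cpot] using Cpot_nonneg ν k
    have hne : A.Nonempty := by
      by_contra hne
      rw [not_nonempty_iff_eq_empty.1 hne, Real.sSup_empty] at huStar
      exact h.ne' huStar
    set M := max (quantile μ uStar - k) 0 with hM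
    have hM0 : 0 ≤ M := le_max_right _ _
    refine le_of_forall_pos_le_add fun ε hε => ?_
    obtain ⟨v, hvA, hv⟩ := exists_lt_of_lt_csSup hne
      (show uStar - ε / (M + 1) < sSup A by
        rw [← huStar]
        linarith [div_pos hε (by linarith : 0 < M + 1)])
    have hvu : v ≤ uStar := huStar ▸ le_csSup hAb hvA
    have h1 := (hc v hvA.1).1 hvA.2 k
    rcases hvu.eq_or_lt with rfl | hvu
    · linarith
    have h2 := Cpot_muU_le_add μ hμ hvA.1.1.le hvu hlt le_rfl k
    have h3 : (uStar - v) * M ≤ ε := by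
      have h4 : uStar - v ≤ ε / (M + 1) := by linarith
      rw [le_div_iff₀ (by linarith)] at h4
      nlinarith
    linarith
  have hP : ∀ k, Ppot (muU μ uStar) k ≤ Ppot ν k := fun k =>
    (Ppot_mono_measure hμ hle k).trans (hcd.Ppot_le hμ hν k)
  have hIic : ∀ x, (muU μ uStar) (Iic x) = ENNReal.ofReal (min uStar (μ (Iic x)).toReal) := by
    intro x
    rw [muU_eq_map_quantile μ hu0 hlt, map_quantile_Iic μ hlt.le]
  have hK : ∃ K, (muU μ uStar) (Ioi K) = 0 := by
    rcases hu0.eq_or_lt with h | h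
    · exact ⟨0, by rw [← h]; simp [muU]⟩
    refine ⟨quantile μ uStar, ?_⟩
    rw [← compl_Iic, measure_compl measurableSet_Iic (measure_ne_top _ _), hIic,
      min_eq_left ((quantile_le_iff μ ⟨h, hlt⟩ _).1 le_rfl), ← ofReal_measureReal, hmass,
      tsub_self]
  obtain ⟨K, hK⟩ := hK
  have hCS := hSStar.Cpot_le hi hν (by rw [hmass]; exact hlt) hK hP hC
  obtain ⟨⟨hSf, hSi⟩, hScd, -, -⟩ := hSStar
  obtain ⟨hμ'f, hμ'i⟩ := hμ'
  obtain ⟨hν'f, hν'i⟩ := hν'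
  have hCν : ∀ k, Cpot ν k = Cpot SStar k + Cpot ν' k := fun k => by
    conv_lhs => rw [← hνsum]
    exact integral_add_measure (integrable_sub_pos_part hSi k) (integrable_sub_pos_part hν'i k)
  have hkey : ∀ y, μ' (Iic y) ≠ 0 → ν' (Ici y) = 0 := by
    intro y hy
    by_contra hy'
    have hy0 : 0 < μ'.real (Iic y) := measureReal_nonneg.lt_of_ne'
      fun h => hy ((measureReal_eq_zero_iff).1 h)
    have hy0' : 0 < ν'.real (Ici y) := measureReal_nonneg.lt_of_ne'
      fun h => hy' ((measureReal_eq_zero_iff).1 h)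
    have hsplit : (μ (Iic y)).toReal = (muU μ uStar).real (Iic y) + μ'.real (Iic y) := by
      conv_lhs => rw [← hμsum]
      exact measureReal_add_apply
    have hmin : (muU μ uStar).real (Iic y) = min uStar (μ (Iic y)).toReal := by
      rw [measureReal_def, hIic, ENNReal.toReal_ofReal (le_min hu0 ENNReal.toReal_nonneg)]
    have huy : (muU μ uStar).real (Iic y) = uStar := by
      rcases min_choice uStar (μ (Iic y)).toReal with h | h
      · rw [hmin, h]
      · rw [hmin, h] at hsplit
        linarith
    obtain ⟨v, huv, hv⟩ := exists_between (show uStar < min 1 (uStar + min (μ'.real (Iic y))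
      (ν'.real (Ici y))) from lt_min hlt (by linarith [lt_min hy0 hy0']))
    have hv1 : v < 1 := hv.trans_le (min_le_left _ _)
    have hv2 := hv.trans_le (min_le_right _ _)
    have hvy : quantile μ v ≤ y := by
      rw [quantile_le_iff μ ⟨hu0.trans_lt huv, hv1⟩, hsplit, huy]
      linarith [min_le_left (μ'.real (Iic y)) (ν'.real (Ici y))]
    have hvA : c v ≠ 0 := fun h => absurd (huStar ▸ le_csSup hAb
      (show v ∈ A from ⟨⟨hu0.trans_lt huv, hv1⟩, h⟩)) (not_le.2 huv)
    rw [Ne, hc v ⟨hu0.trans_lt huv, hv1⟩] at hvA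
    push Not at hvA
    obtain ⟨k, hk⟩ := hvA
    have h1 := Cpot_muU_le_add μ hμ hu0 huv hv1 hvy k
    have h2 := hCS k
    have h3 := hCν k
    rcases le_total y k with hyk | hyk
    · rw [max_eq_right (sub_nonpos.2 hyk)] at h1
      linarith [Cpot_nonneg ν' k]
    · rw [max_eq_left (sub_nonneg.2 hyk)] at h1
      have h4 := measure_Ici_mul_le_Cpot hν'i y k
      nlinarith [min_le_right (μ'.real (Iic y)) (ν'.real (Ici y)), sub_nonneg.2 hyk]
  have hμ'0 : μ' ≠ 0 := by
    rintro rfl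
    rw [add_zero] at hμsum
    rw [hμsum, probReal_univ] at hmass
    exact hlt.ne hmass.symm
  have hν'0 : ν' ≠ 0 := by
    rintro rfl
    rw [add_zero] at hνsum
    rw [hScd.real_univ_eq, hνsum, probReal_univ] at hmass
    exact hlt.ne hmass.symm
  obtain ⟨y₀, hy₀⟩ := exists_measure_Ici_ne_zero hν'0
  have hbdd : BddBelow {y | μ' (Iic y) ≠ 0} := by
    refine ⟨y₀, fun y hy => ?_⟩
    by_contra! h
    exact hy₀ (measure_mono_null (Ici_subset_Ici.2 h.le) (hkey y hy))
  have hne : {y | μ' (Iic y) ≠ 0}.Nonempty := exists_measure_Iic_ne_zero hμ'0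
  have hleast := isLeast_msupport_sInf hne hbdd
  refine ⟨⟨_, hleast.1⟩, ⟨_, hleast.2⟩, ?_, ?_⟩
  · rw [hleast.csInf_eq]
    set l := sInf {y | μ' (Iic y) ≠ 0} with hl
    obtain ⟨w, -, hw, hwt⟩ := exists_seq_strictAnti_tendsto l
    refine measure_mono_null (t := ⋃ n, Ici (w n)) (fun x hx => ?_)
      (measure_iUnion_null fun n => ?_)
    · obtain ⟨n, hn⟩ := (hwt.eventually (gt_mem_nhds (show l < x from hx))).exists
      exact mem_iUnion.2 ⟨n, hn.le⟩
    · obtain ⟨y, hy, hyw⟩ := exists_lt_of_csInf_lt hne (hw n)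
      exact measure_mono_null (Ici_subset_Ici.2 hyw.le) (hkey y hy)
  · rw [or_iff_not_imp_left]
    intro h
    refine measure_mono_null (singleton_subset_iff.2 self_mem_Ici) (hkey _ fun h0 => h ?_)
    exact measure_mono_null (singleton_subset_iff.2 self_mem_Iic) h0
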